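/- arXiv:1907.02132 — 2 statements merged into one kernel-verified Lean document; each statement's English description precedes it below -/
import Mathlib

section
/- The function d_H' : I_H × I_H → [0,∞) is a metric on I_H: it is nonnegative, symmetric, vanishes precisely when the two interval partitions are equal, and satisfies the triangle inequality. -/
/-!
`d_H'` is a metric because a correspondence is, up to small mass, an order-preserving matching of
blocks, and any finite family of distinct blocks inside `[x, y]` has total mass at most `y - x`
(`sum_mass_le`).

* The distortion of a correspondence is nonnegative by this mass bound, and it is symmetric under
  exchanging the two coordinates.
* `d_H'(β, β) = 0`: the blocks exhaust `‖β‖` up to a null set, so finitely many of them carry mass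
  `> ‖β‖ - ε` (`exists_finset_mass`); match each of these with itself.
* Triangle inequality: compose two correspondences through their common middle blocks. A pair of
  the first correspondence that is lost in the composition has a middle block unused by the second,
  so the lost mass is paid for by the unmatched mass of the second (`comp_bound`).
* If `d_H'(β, γ) = 0`, a correspondence of distortion `ε` smaller than the mass of `U ∈ β` has to
  use `U`. The mass matched to the left of `U` is within `ε` of everything on its left, so the
  partner `V` of `U` has endpoints within `ε` of those of `U` (`left_le`, `right_le`,
  `exists_close_block`). For small `ε` the partner contains the midpoint of `U`, so it does not
  depend on `ε`; hence `U = V ∈ γ`.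

The definition of `d_H'` uses correspondences indexed increasingly by `Fin n`; it is convenient to
produce them as finite families in arbitrary order, which `dHp_le_of_family` then sorts.
-/

open MeasureTheory Filter Topology Set

/-- An interval partition of `[0, L]`: a set of disjoint open subintervals whose
complement in `[0, L]` is Lebesgue-null. A block is encoded by its endpoint pair
`(a, b)` with `a < b`, representing the open interval `(a, b)`. -/
structure IntervalPartition where
  length : ℝ
  length_nonneg : 0 ≤ length
  blocks : Set (ℝ × ℝ)
  blocks_lt : ∀ p ∈ blocks, p.1 < p.2
  blocks_sub : ∀ p ∈ blocks, 0 ≤ p.1 ∧ p.2 ≤ length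
  blocks_disjoint : ∀ p ∈ blocks, ∀ q ∈ blocks, p ≠ q →
    Set.Ioo p.1 p.2 ∩ Set.Ioo q.1 q.2 = ∅
  compl_null : volume (Set.Icc 0 length \ ⋃ p ∈ blocks, Set.Ioo p.1 p.2) = 0

namespace IntervalPartition

/-- The mass (Lebesgue measure) of a block `(a, b)`. -/
def mass (p : ℝ × ℝ) : ℝ := p.2 - p.1

/-- The complement `C_β = [0, ‖β‖] \ ⋃_{U ∈ β} U`. -/
def cset (β : IntervalPartition) : Set ℝ :=
  Set.Icc 0 β.length \ ⋃ p ∈ β.blocks, Set.Ioo p.1 p.2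

/-- A correspondence between `β` and `γ`: a finite sequence of pairs of blocks,
strictly increasing in the left-to-right order in each coordinate. -/
def IsCorrespondence (β γ : IntervalPartition) (n : ℕ)
    (c : Fin n → (ℝ × ℝ) × (ℝ × ℝ)) : Prop :=
  (∀ j, (c j).1 ∈ β.blocks ∧ (c j).2 ∈ γ.blocks) ∧
  (∀ j k : Fin n, j < k → (c j).1.2 ≤ (c k).1.1 ∧ (c j).2.2 ≤ (c k).2.1)

/-- The Hausdorff distortion of a correspondence: the maximum of quantities
(i) and (ii) of the paper. -/
noncomputable def hausDistortion (β γ : IntervalPartition) (n : ℕ)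
    (c : Fin n → (ℝ × ℝ) × (ℝ × ℝ)) : ℝ :=
  max ((∑ j : Fin n, |mass (c j).1 - mass (c j).2|) + β.length - ∑ j : Fin n, mass (c j).1)
      ((∑ j : Fin n, |mass (c j).1 - mass (c j).2|) + γ.length - ∑ j : Fin n, mass (c j).2)

/-- The metric `d_H'`: infimum of the Hausdorff distortion over all correspondences. -/
noncomputable def dHp (β γ : IntervalPartition) : ℝ :=
  sInf {x | ∃ n, ∃ c : Fin n → (ℝ × ℝ) × (ℝ × ℝ),
    IsCorrespondence β γ n c ∧ x = hausDistortion β γ n c}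

/-- The metric `d_H`: the Hausdorff distance between the complements. -/
noncomputable def dH (β γ : IntervalPartition) : ℝ :=
  Metric.hausdorffDist β.cset γ.cset

/-- The number of blocks of mass `> h` ending at or before `t`. -/
noncomputable def divCount (β : IntervalPartition) (t h : ℝ) : ℕ :=
  Set.ncard {p : ℝ × ℝ | p ∈ β.blocks ∧ h < p.2 - p.1 ∧ p.2 ≤ t}

/-- `β` has `a`-diversity `d` at `t`:
`Γ(1-a) · lim_{h↓0} h^a · #{(x,y) ∈ β : y - x > h, y ≤ t} = d`. -/
def HasDiversity (a : ℝ) (β : IntervalPartition) (t d : ℝ) : Prop :=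
  Tendsto (fun h : ℝ => Real.Gamma (1 - a) * h ^ a * (divCount β t h : ℝ))
    (𝓝[>] 0) (𝓝 d)

/-- The `a`-diversity property: the diversity limit exists at every `t ∈ [0, ‖β‖]`. -/
def HasDiversityProp (a : ℝ) (β : IntervalPartition) : Prop :=
  ∀ t ∈ Set.Icc 0 β.length, ∃ d, HasDiversity a β t d

/-- The diversity function `𝒟_β(t)` (the value of the limit, when it exists). -/
noncomputable def diversity (a : ℝ) (β : IntervalPartition) (t : ℝ) : ℝ :=
  limUnder (𝓝[>] (0:ℝ)) (fun h : ℝ => Real.Gamma (1 - a) * h ^ a * (divCount β t h : ℝ))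

/-- The total diversity `𝒟_β(∞) = 𝒟_β(‖β‖)`. -/
noncomputable def totalDiversity (a : ℝ) (β : IntervalPartition) : ℝ :=
  diversity a β β.length

/-- The diversity `𝒟_β(U)` of a block `U`, evaluated at its midpoint. -/
noncomputable def blockDiversity (a : ℝ) (β : IntervalPartition) (p : ℝ × ℝ) : ℝ :=
  diversity a β ((p.1 + p.2) / 2)

/-- The `a`-distortion of a correspondence: the maximum of quantities (i)-(iv). -/
noncomputable def alphaDistortion (a : ℝ) (β γ : IntervalPartition) (n : ℕ)
    (c : Fin n → (ℝ × ℝ) × (ℝ × ℝ)) : ℝ :=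
  max (hausDistortion β γ n c)
    (max (⨆ j : Fin n, |blockDiversity a β (c j).1 - blockDiversity a γ (c j).2|)
         |totalDiversity a β - totalDiversity a γ|)

/-- The metric `d_α`: infimum of the `a`-distortion over all correspondences. -/
noncomputable def dA (a : ℝ) (β γ : IntervalPartition) : ℝ :=
  sInf {x | ∃ n, ∃ c : Fin n → (ℝ × ℝ) × (ℝ × ℝ),
    IsCorrespondence β γ n c ∧ x = alphaDistortion a β γ n c}

end IntervalPartition

/-- A point of the space `J`: an interval partition `η` together with an increasing,
right-continuous function `f` that is constant on every block of `η`, on `[‖η‖, ∞)`,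
and (as `f` is defined on `[0, ∞]`) on `(-∞, 0]`. -/
structure JPoint where
  part : IntervalPartition
  f : ℝ → ℝ
  f_nonneg : ∀ t, 0 ≤ f t
  f_mono : Monotone f
  f_rightCont : ∀ t, ContinuousWithinAt f (Set.Ici t) t
  f_const_block : ∀ p ∈ part.blocks, ∀ s ∈ Set.Ioo p.1 p.2, ∀ t ∈ Set.Ioo p.1 p.2, f s = f t
  f_const_top : ∀ t, part.length ≤ t → f t = f part.length
  f_const_neg : ∀ t, t ≤ (0:ℝ) → f t = f 0

/-- The distortion of a correspondence between two points of `J`: as the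
`a`-distortion, but with `f`, `g` in place of the diversity functions. -/
noncomputable def jDistortion (x y : JPoint) (n : ℕ)
    (c : Fin n → (ℝ × ℝ) × (ℝ × ℝ)) : ℝ :=
  max (IntervalPartition.hausDistortion x.part y.part n c)
    (max (⨆ j : Fin n, |x.f (((c j).1.1 + (c j).1.2) / 2) - y.f (((c j).2.1 + (c j).2.2) / 2)|)
         |x.f x.part.length - y.f y.part.length|)

/-- The metric `d_J` on `J`. -/
noncomputable def dJ (x y : JPoint) : ℝ :=
  sInf {r | ∃ n, ∃ c : Fin n → (ℝ × ℝ) × (ℝ × ℝ),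
    IntervalPartition.IsCorrespondence x.part y.part n c ∧ r = jDistortion x y n c}

/-! ### Mass bounds and finite families of blocks -/

namespace IntervalPartition

lemma mass_nonneg {β : IntervalPartition} {p : ℝ × ℝ} (hp : p ∈ β.blocks) : 0 ≤ mass p :=
  sub_nonneg.2 (β.blocks_lt p hp).le

lemma blocks_ordered (β : IntervalPartition) {p q : ℝ × ℝ} (hp : p ∈ β.blocks)
    (hq : q ∈ β.blocks) (h : p ≠ q) : p.2 ≤ q.1 ∨ q.2 ≤ p.1 := by
  have h0 := β.blocks_disjoint p hp q hq h
  rw [Set.Ioo_inter_Ioo, Set.Ioo_eq_empty_iff, not_lt] at h0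
  have := β.blocks_lt p hp
  have := β.blocks_lt q hq
  rcases inf_le_iff.1 h0 with h1 | h1 <;> rcases le_sup_iff.1 h1 with h2 | h2
  · linarith
  · exact Or.inl h2
  · exact Or.inr h2
  · linarith

/-- Distinct blocks are disjoint, so finitely many of them inside `[x, y]` have total mass at most
`y - x`. -/
lemma sum_mass_le (β : IntervalPartition) {ι : Type*} (s : Finset ι) (f : ι → ℝ × ℝ)
    (hf : ∀ i ∈ s, f i ∈ β.blocks) (hinj : Set.InjOn f s) {x y : ℝ} (hxy : x ≤ y)
    (hb : ∀ i ∈ s, x ≤ (f i).1 ∧ (f i).2 ≤ y) : ∑ i ∈ s, mass (f i) ≤ y - x := by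
  have h1 : volume (⋃ i ∈ s, Set.Ioo (f i).1 (f i).2) = ∑ i ∈ s, ENNReal.ofReal (mass (f i)) := by
    rw [measure_biUnion_finset]
    · simp [mass]
    · intro i hi j hj hij
      exact Set.disjoint_iff_inter_eq_empty.2
        (β.blocks_disjoint _ (hf i hi) _ (hf j hj) (fun h => hij (hinj hi hj h)))
    · exact fun _ _ => measurableSet_Ioo
  have h2 : (⋃ i ∈ s, Set.Ioo (f i).1 (f i).2) ⊆ Set.Icc x y := by
    refine Set.iUnion₂_subset fun i hi t ht => ?_
    exact ⟨(hb i hi).1.trans ht.1.le, ht.2.le.trans (hb i hi).2⟩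
  have h3 := measure_mono (μ := volume) h2
  rw [h1, Real.volume_Icc, ← ENNReal.ofReal_sum_of_nonneg (fun i hi => mass_nonneg (hf i hi))] at h3
  exact (ENNReal.ofReal_le_ofReal_iff (by linarith)).1 h3

lemma sum_mass_le_length (β : IntervalPartition) {ι : Type*} (s : Finset ι) (f : ι → ℝ × ℝ)
    (hf : ∀ i ∈ s, f i ∈ β.blocks) (hinj : Set.InjOn f s) :
    ∑ i ∈ s, mass (f i) ≤ β.length := by
  simpa using β.sum_mass_le s f hf hinj β.length_nonneg (fun i hi => β.blocks_sub _ (hf i hi))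

lemma sum_mass_add_le_length (β : IntervalPartition) {ι κ : Type*} (s : Finset ι) (t : Finset κ)
    (f : ι → ℝ × ℝ) (g : κ → ℝ × ℝ) (hf : ∀ i ∈ s, f i ∈ β.blocks) (hg : ∀ i ∈ t, g i ∈ β.blocks)
    (hfi : Set.InjOn f s) (hgi : Set.InjOn g t) (hfg : ∀ i ∈ s, ∀ k ∈ t, f i ≠ g k) :
    ∑ i ∈ s, mass (f i) + ∑ k ∈ t, mass (g k) ≤ β.length := by
  have h := β.sum_mass_le_length (s.disjSum t) (Sum.elim f g) ?_ ?_
  · simpa [Finset.sum_disjSum] using h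
  · rintro (i | k) hi
    · exact hf i (by simpa using hi)
    · exact hg k (by simpa using hi)
  · rintro (i | k) hi (i' | k') hi' h
    · rw [hfi (by simpa using hi) (by simpa using hi') h]
    · exact absurd h (hfg i (by simpa using hi) k' (by simpa using hi'))
    · exact absurd h.symm (hfg i' (by simpa using hi') k (by simpa using hi))
    · rw [hgi (by simpa using hi) (by simpa using hi') h]

section Correspondence

variable {β γ : IntervalPartition} {n : ℕ} {c : Fin n → (ℝ × ℝ) × (ℝ × ℝ)}

lemma IsCorrespondence.swap (h : IsCorrespondence β γ n c) :
    IsCorrespondence γ β n (fun j => (c j).swap) :=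
  ⟨fun j => (h.1 j).symm, fun j k hjk => (h.2 j k hjk).symm⟩

lemma hausDistortion_swap :
    hausDistortion γ β n (fun j => (c j).swap) = hausDistortion β γ n c := by
  simp only [hausDistortion, Prod.fst_swap, Prod.snd_swap]
  rw [max_comm]
  simp only [abs_sub_comm]

lemma IsCorrespondence.fst_inj (h : IsCorrespondence β γ n c) :
    Function.Injective (fun j => (c j).1) := by
  intro j k hjk
  have hj := β.blocks_lt _ (h.1 j).1
  have hk := β.blocks_lt _ (h.1 k).1
  simp only at hjk
  rcases lt_trichotomy j k with hlt | rfl | hlt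
  · have := (h.2 j k hlt).1
    rw [hjk] at this
    linarith
  · rfl
  · have := (h.2 k j hlt).1
    rw [hjk] at this
    linarith

lemma IsCorrespondence.snd_inj (h : IsCorrespondence β γ n c) :
    Function.Injective (fun j => (c j).2) := h.swap.fst_inj

lemma IsCorrespondence.distortion_nonneg (h : IsCorrespondence β γ n c) :
    0 ≤ hausDistortion β γ n c := by
  refine le_max_of_le_left ?_
  have h1 := β.sum_mass_le_length Finset.univ (fun j => (c j).1) (fun j _ => (h.1 j).1)
    h.fst_inj.injOn
  have h2 : 0 ≤ ∑ j, |mass (c j).1 - mass (c j).2| := Finset.sum_nonneg fun _ _ => abs_nonneg _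
  linarith

lemma dHp_le (h : IsCorrespondence β γ n c) : dHp β γ ≤ hausDistortion β γ n c := by
  refine csInf_le ⟨0, ?_⟩ ⟨n, c, h, rfl⟩
  rintro x ⟨m, d, hd, rfl⟩
  exact hd.distortion_nonneg

lemma dHp_set_nonempty (β γ : IntervalPartition) :
    {x | ∃ n, ∃ c : Fin n → (ℝ × ℝ) × (ℝ × ℝ),
      IsCorrespondence β γ n c ∧ x = hausDistortion β γ n c}.Nonempty :=
  ⟨_, 0, Fin.elim0, ⟨fun j => j.elim0, fun j => j.elim0⟩, rfl⟩

lemma dHp_nonneg (β γ : IntervalPartition) : 0 ≤ dHp β γ := by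
  refine le_csInf (dHp_set_nonempty β γ) ?_
  rintro x ⟨m, d, hd, rfl⟩
  exact hd.distortion_nonneg

lemma exists_lt_of_dHp_lt {x : ℝ} (h : dHp β γ < x) :
    ∃ n, ∃ c : Fin n → (ℝ × ℝ) × (ℝ × ℝ),
      IsCorrespondence β γ n c ∧ hausDistortion β γ n c < x := by
  obtain ⟨_, ⟨n, c, hc, rfl⟩, hx⟩ := exists_lt_of_csInf_lt (dHp_set_nonempty β γ) h
  exact ⟨n, c, hc, hx⟩

lemma dHp_comm_le (β γ : IntervalPartition) : dHp β γ ≤ dHp γ β := by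
  refine le_csInf (dHp_set_nonempty γ β) ?_
  rintro x ⟨m, d, hd, rfl⟩
  rw [← hausDistortion_swap]
  exact dHp_le hd.swap

/-- A finite family of pairs of blocks, any two of which are ordered the same way in both
coordinates, becomes a correspondence once sorted by the left endpoints of its first blocks. -/
lemma dHp_le_of_family {ι : Type*} (s : Finset ι) (c : ι → (ℝ × ℝ) × (ℝ × ℝ))
    (hm : ∀ i ∈ s, (c i).1 ∈ β.blocks ∧ (c i).2 ∈ γ.blocks)
    (ho : ∀ i ∈ s, ∀ k ∈ s, i ≠ k → ((c i).1.2 ≤ (c k).1.1 ∧ (c i).2.2 ≤ (c k).2.1) ∨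
      ((c k).1.2 ≤ (c i).1.1 ∧ (c k).2.2 ≤ (c i).2.1)) :
    dHp β γ ≤ max
      ((∑ i ∈ s, |mass (c i).1 - mass (c i).2|) + β.length - ∑ i ∈ s, mass (c i).1)
      ((∑ i ∈ s, |mass (c i).1 - mass (c i).2|) + γ.length - ∑ i ∈ s, mass (c i).2) := by
  classical
  have hinj : Set.InjOn (fun i => (c i).1.1) s := by
    intro i hi k hk hik
    by_contra hne
    simp only at hik
    have := β.blocks_lt _ (hm i hi).1
    have := β.blocks_lt _ (hm k hk).1
    rcases ho i hi k hk hne with h | h <;> linarith [h.1]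
  set T := s.image (fun i => (c i).1.1) with hT
  let e := T.orderEmbOfFin rfl
  have hex : ∀ j, ∃ i ∈ s, (c i).1.1 = e j := fun j =>
    Finset.mem_image.1 (T.orderEmbOfFin_mem rfl j)
  choose g hgs hge using hex
  have hsum : ∀ F : ι → ℝ, ∑ j, F (g j) = ∑ i ∈ s, F i := by
    intro F
    refine Finset.sum_nbij g (fun j _ => hgs j) ?_ ?_ (fun _ _ => rfl)
    · intro j _ k _ hjk
      apply e.injective
      rw [← hge, ← hge, hjk]
    · intro i hi
      have : (c i).1.1 ∈ Set.range e := by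
        rw [Finset.range_orderEmbOfFin]
        exact Finset.mem_coe.2 (Finset.mem_image_of_mem _ hi)
      obtain ⟨j, hj⟩ := this
      exact ⟨j, by simp, hinj (hgs j) hi ((hge j).trans hj)⟩
  have hc : IsCorrespondence β γ T.card (fun j => c (g j)) := by
    refine ⟨fun j => hm _ (hgs j), fun j k hjk => ?_⟩
    have hlt : (c (g j)).1.1 < (c (g k)).1.1 := by
      rw [hge, hge]
      exact e.strictMono hjk
    rcases ho _ (hgs j) _ (hgs k) (fun h => by rw [h] at hlt; exact hlt.false) with h | h
    · exact h
    · have := β.blocks_lt _ (hm _ (hgs k)).1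
      linarith [h.1]
  refine (dHp_le hc).trans (le_of_eq ?_)
  simp only [hausDistortion]
  rw [hsum (fun i => |mass (c i).1 - mass (c i).2|), hsum (fun i => mass (c i).1),
    hsum (fun i => mass (c i).2)]

end Correspondence

/-! ### Distance zero from a partition to itself -/

lemma exists_finset_mass (β : IntervalPartition) {ε : ℝ} (hε : 0 < ε) :
    ∃ s : Finset (ℝ × ℝ), (∀ p ∈ s, p ∈ β.blocks) ∧ β.length - ε < ∑ p ∈ s, mass p := by
  classical
  rcases β.length_nonneg.eq_or_lt with h0 | hpos
  · exact ⟨∅, by simp, by simp [← h0, hε]⟩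
  have hd : β.blocks.PairwiseDisjoint (fun p => Set.Ioo p.1 p.2) := fun p hp q hq hpq =>
    Set.disjoint_iff_inter_eq_empty.2 (β.blocks_disjoint p hp q hq hpq)
  have hcount : β.blocks.Countable :=
    hd.countable_of_isOpen (fun _ _ => isOpen_Ioo)
      (fun p hp => Set.nonempty_Ioo.2 (β.blocks_lt p hp))
  have hvol := measure_biUnion (μ := volume) hcount hd (fun _ _ => measurableSet_Ioo)
  have hle : ENNReal.ofReal β.length ≤ ∑' p : β.blocks, volume (Set.Ioo p.1.1 p.1.2) := by
    rw [← hvol]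
    calc ENNReal.ofReal β.length = volume (Set.Icc 0 β.length) := by simp
      _ ≤ volume ((Set.Icc 0 β.length \ ⋃ p ∈ β.blocks, Set.Ioo p.1 p.2) ∪
            ⋃ p ∈ β.blocks, Set.Ioo p.1 p.2) := measure_mono (by simp)
      _ ≤ _ := measure_union_le _ _
      _ = _ := by rw [β.compl_null, zero_add]
  have hlt : ENNReal.ofReal (β.length - ε) < ∑' p : β.blocks, volume (Set.Ioo p.1.1 p.1.2) :=
    lt_of_lt_of_le ((ENNReal.ofReal_lt_ofReal_iff hpos).2 (by linarith)) hle
  rw [ENNReal.tsum_eq_iSup_sum] at hlt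
  obtain ⟨t, ht⟩ := lt_iSup_iff.1 hlt
  refine ⟨t.map (Function.Embedding.subtype _), ?_, ?_⟩
  · intro p hp
    obtain ⟨q, _, rfl⟩ := Finset.mem_map.1 hp
    exact q.2
  · rw [Finset.sum_map]
    simp only [Real.volume_Ioo] at ht
    rw [← ENNReal.ofReal_sum_of_nonneg (fun p _ => sub_nonneg.2 (β.blocks_lt _ p.2).le)] at ht
    exact (ENNReal.ofReal_lt_ofReal_iff'.1 ht).1

lemma dHp_self (β : IntervalPartition) : dHp β β = 0 := by
  refine le_antisymm (le_of_forall_pos_le_add fun ε hε => ?_) (dHp_nonneg β β)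
  obtain ⟨s, hs, hlt⟩ := β.exists_finset_mass hε
  refine (dHp_le_of_family s (fun p => (p, p)) (fun p hp => ⟨hs p hp, hs p hp⟩) ?_).trans ?_
  · intro p hp q hq hpq
    simpa using β.blocks_ordered (hs p hp) (hs q hq) hpq
  · simp only [sub_self, abs_zero, Finset.sum_const_zero, max_self]
    linarith

/-! ### The triangle inequality -/

/-- One-sided distortion bound for a composition. The index set `s` lists the pairs of the
composition, `f` and `g` give their parents in the two correspondences, `u, v` and `v', w` are the
block masses there, and `hE` says that the middle blocks of the pairs of the first correspondence
without offspring fit into the part of the middle partition left free by the second. -/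
lemma comp_bound {ι : Type*} {n m : ℕ} (s : Finset ι) (f : ι → Fin n) (g : ι → Fin m)
    (hf : Set.InjOn f s) (hg : Set.InjOn g s) (u v : Fin n → ℝ) (v' w : Fin m → ℝ) (B E : ℝ)
    (hv : ∀ i ∈ s, v (f i) = v' (g i))
    (hE : ∑ j ∈ Finset.univ \ s.image f, v j + ∑ k, v' k ≤ E) :
    ∑ i ∈ s, |u (f i) - w (g i)| + B - ∑ i ∈ s, u (f i) ≤
      (∑ j, |u j - v j| + B - ∑ j, u j) + (∑ k, |v' k - w k| + E - ∑ k, v' k) := by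
  have h1 : ∑ i ∈ s, |u (f i) - w (g i)| ≤
      ∑ i ∈ s, |u (f i) - v (f i)| + ∑ i ∈ s, |v' (g i) - w (g i)| := by
    rw [← Finset.sum_add_distrib]
    refine Finset.sum_le_sum fun i hi => ?_
    rw [← hv i hi]
    exact abs_sub_le _ _ _
  have h2 : ∀ F : Fin n → ℝ, ∑ j, F j = ∑ j ∈ Finset.univ \ s.image f, F j + ∑ i ∈ s, F (f i) := by
    intro F
    rw [← Finset.sum_image (f := F) hf, Finset.sum_sdiff (Finset.subset_univ _)]
  have h3 : ∑ i ∈ s, |v' (g i) - w (g i)| ≤ ∑ k, |v' k - w k| := by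
    rw [← Finset.sum_image (f := fun k => |v' k - w k|) hg]
    exact Finset.sum_le_sum_of_subset_of_nonneg (Finset.subset_univ _) fun _ _ _ => abs_nonneg _
  have h4 : ∑ j ∈ Finset.univ \ s.image f, u j ≤ ∑ j ∈ Finset.univ \ s.image f, |u j - v j| +
      ∑ j ∈ Finset.univ \ s.image f, v j := by
    rw [← Finset.sum_add_distrib]
    exact Finset.sum_le_sum fun j _ => by linarith [le_abs_self (u j - v j)]
  have h5 := h2 u
  have h6 := h2 (fun j => |u j - v j|)
  linarith

lemma dHp_triangle_aux {β γ η : IntervalPartition} {n m : ℕ} {c : Fin n → (ℝ × ℝ) × (ℝ × ℝ)}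
    {d : Fin m → (ℝ × ℝ) × (ℝ × ℝ)} (hc : IsCorrespondence β η n c)
    (hd : IsCorrespondence η γ m d) :
    dHp β γ ≤ hausDistortion β η n c + hausDistortion η γ m d := by
  classical
  let s : Finset (Fin n × Fin m) := Finset.univ.filter fun i => (c i.1).2 = (d i.2).1
  have hs : ∀ i : Fin n × Fin m, i ∈ s ↔ (c i.1).2 = (d i.2).1 := by simp [s]
  have hf : Set.InjOn (Prod.fst : Fin n × Fin m → Fin n) s := by
    rintro ⟨j, k⟩ hi ⟨j', k'⟩ hi' (rfl : j = j')
    exact Prod.ext rfl (hd.fst_inj (((hs _).1 hi).symm.trans ((hs _).1 hi')))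
  have hg : Set.InjOn (Prod.snd : Fin n × Fin m → Fin m) s := by
    rintro ⟨j, k⟩ hi ⟨j', k'⟩ hi' (rfl : k = k')
    exact Prod.ext (hc.snd_inj (((hs _).1 hi).trans ((hs _).1 hi').symm)) rfl
  -- The middle block shared by the parents transports the order of `c` to that of `d`.
  have hord : ∀ i ∈ s, ∀ i' ∈ s, i.1 < i'.1 → (c i.1).1.2 ≤ (c i'.1).1.1 ∧
      (d i.2).2.2 ≤ (d i'.2).2.1 := by
    intro i hi i' hi' hlt
    have h1 := hc.2 _ _ hlt
    have e := (hs _).1 hi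
    have e' := (hs _).1 hi'
    have l := η.blocks_lt _ (hd.1 i.2).1
    have l' := η.blocks_lt _ (hd.1 i'.2).1
    have h2 := h1.2
    rw [e, e'] at h2
    refine ⟨h1.1, ?_⟩
    rcases lt_trichotomy i.2 i'.2 with h | h | h
    · exact (hd.2 _ _ h).2
    · rw [h] at h2
      linarith
    · linarith [(hd.2 _ _ h).1]
  refine (dHp_le_of_family s (fun i => ((c i.1).1, (d i.2).2))
    (fun i _ => ⟨(hc.1 _).1, (hd.1 _).2⟩) ?_).trans ?_
  · intro i hi i' hi' hne
    rcases lt_trichotomy i.1 i'.1 with h | h | h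
    · exact Or.inl (hord i hi i' hi' h)
    · exact absurd (hf hi hi' h) hne
    · exact Or.inr (hord i' hi' i hi h)
  · have hE1 : ∑ j ∈ Finset.univ \ s.image Prod.fst, mass (c j).2 + ∑ k, mass (d k).1
        ≤ η.length := by
      refine η.sum_mass_add_le_length _ _ (fun j => (c j).2) (fun k => (d k).1)
        (fun j _ => (hc.1 j).2) (fun k _ => (hd.1 k).1) hc.snd_inj.injOn hd.fst_inj.injOn ?_
      intro j hj k _ h
      exact (Finset.mem_sdiff.1 hj).2 (Finset.mem_image.2 ⟨(j, k), (hs _).2 h, rfl⟩)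
    have hE2 : ∑ k ∈ Finset.univ \ s.image Prod.snd, mass (d k).1 + ∑ j, mass (c j).2
        ≤ η.length := by
      refine η.sum_mass_add_le_length _ _ (fun k => (d k).1) (fun j => (c j).2)
        (fun k _ => (hd.1 k).1) (fun j _ => (hc.1 j).2) hd.fst_inj.injOn hc.snd_inj.injOn ?_
      intro k hk j _ h
      exact (Finset.mem_sdiff.1 hk).2 (Finset.mem_image.2 ⟨(j, k), (hs _).2 h.symm, rfl⟩)
    have b1 := comp_bound s Prod.fst Prod.snd hf hg (fun j => mass (c j).1)
      (fun j => mass (c j).2) (fun k => mass (d k).1) (fun k => mass (d k).2) β.length η.length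
      (fun i hi => by simp only [(hs i).1 hi]) hE1
    have b2 := comp_bound s Prod.snd Prod.fst hg hf (fun k => mass (d k).2)
      (fun k => mass (d k).1) (fun j => mass (c j).2) (fun j => mass (c j).1) γ.length η.length
      (fun i hi => by simp only [(hs i).1 hi]) hE2
    simp only [abs_sub_comm (mass (d _).2), abs_sub_comm (mass (c _).2)] at b2
    refine max_le (b1.trans ?_) (b2.trans ?_)
    · exact add_le_add (le_max_left _ _) (le_max_left _ _)
    · rw [add_comm]
      exact add_le_add (le_max_right _ _) (le_max_right _ _)

lemma dHp_triangle (β γ η : IntervalPartition) : dHp β γ ≤ dHp β η + dHp η γ := by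
  refine le_of_forall_pos_le_add fun ε hε => ?_
  obtain ⟨n, c, hc, h1⟩ := exists_lt_of_dHp_lt (show dHp β η < dHp β η + ε / 2 by linarith)
  obtain ⟨m, d, hd, h2⟩ := exists_lt_of_dHp_lt (show dHp η γ < dHp η γ + ε / 2 by linarith)
  linarith [dHp_triangle_aux hc hd]

/-! ### Separation -/

section Separation

variable {β γ : IntervalPartition} {n : ℕ} {c : Fin n → (ℝ × ℝ) × (ℝ × ℝ)}

lemma IsCorrespondence.length_le (h : IsCorrespondence β γ n c) :
    β.length ≤ γ.length + hausDistortion β γ n c := by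
  have h1 := γ.sum_mass_le_length Finset.univ (fun j => (c j).2) (fun j _ => (h.1 j).2)
    h.snd_inj.injOn
  have h2 : ∑ j, mass (c j).1 ≤ ∑ j, |mass (c j).1 - mass (c j).2| + ∑ j, mass (c j).2 := by
    rw [← Finset.sum_add_distrib]
    exact Finset.sum_le_sum fun j _ => by linarith [le_abs_self (mass (c j).1 - mass (c j).2)]
  have h3 : _ ≤ hausDistortion β γ n c := le_max_left _ _
  linarith

/-- A block that no pair uses has mass at most the distortion. -/
lemma IsCorrespondence.exists_index (h : IsCorrespondence β γ n c) {p : ℝ × ℝ}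
    (hp : p ∈ β.blocks) (hm : hausDistortion β γ n c < mass p) : ∃ k, (c k).1 = p := by
  by_contra! hne
  have h1 := β.sum_mass_add_le_length Finset.univ (Finset.univ : Finset Unit)
    (fun j => (c j).1) (fun _ => p) (fun j _ => (h.1 j).1) (fun _ _ => hp)
    h.fst_inj.injOn (fun _ _ _ _ _ => rfl) (fun j _ _ _ => hne j)
  have h2 : 0 ≤ ∑ j, |mass (c j).1 - mass (c j).2| := Finset.sum_nonneg fun _ _ => abs_nonneg _
  have h3 : _ ≤ hausDistortion β γ n c := le_max_left _ _
  simp at h1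
  linarith

lemma sum_split (f : Fin n → ℝ) (k : Fin n) :
    ∑ j, f j = ∑ j ∈ Finset.Iio k, f j + f k + ∑ j ∈ Finset.Ioi k, f j := by
  classical
  have h1 : (Finset.univ : Finset (Fin n)) = insert k (Finset.Iio k ∪ Finset.Ioi k) := by
    ext j
    simp
    tauto
  rw [h1, Finset.sum_insert (by simp), Finset.sum_union]
  · ring
  · rw [Finset.disjoint_left]
    intro j hj hj'
    exact lt_asymm (Finset.mem_Iio.1 hj) (Finset.mem_Ioi.1 hj')

lemma IsCorrespondence.sum_Iio_le (h : IsCorrespondence β γ n c) (k : Fin n) :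
    ∑ j ∈ Finset.Iio k, mass (c j).1 ≤ (c k).1.1 := by
  simpa using β.sum_mass_le (Finset.Iio k) (fun j => (c j).1) (fun j _ => (h.1 j).1)
    h.fst_inj.injOn (β.blocks_sub _ (h.1 k).1).1
    (fun j hj => ⟨(β.blocks_sub _ (h.1 j).1).1, (h.2 j k (Finset.mem_Iio.1 hj)).1⟩)

lemma IsCorrespondence.sum_Ioi_le (h : IsCorrespondence β γ n c) (k : Fin n) :
    ∑ j ∈ Finset.Ioi k, mass (c j).1 ≤ β.length - (c k).1.2 :=
  β.sum_mass_le (Finset.Ioi k) (fun j => (c j).1) (fun j _ => (h.1 j).1)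
    h.fst_inj.injOn (β.blocks_sub _ (h.1 k).1).2
    (fun j hj => ⟨(h.2 k j (Finset.mem_Ioi.1 hj)).1, (β.blocks_sub _ (h.1 j).1).2⟩)

lemma sum_mass_fst_le (s : Finset (Fin n)) :
    ∑ j ∈ s, mass (c j).1 ≤ ∑ j, |mass (c j).1 - mass (c j).2| + ∑ j ∈ s, mass (c j).2 := by
  have h1 : ∑ j ∈ s, |mass (c j).1 - mass (c j).2| ≤ ∑ j, |mass (c j).1 - mass (c j).2| :=
    Finset.sum_le_sum_of_subset_of_nonneg (Finset.subset_univ _) fun _ _ _ => abs_nonneg _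
  have h2 : ∑ j ∈ s, mass (c j).1 ≤
      ∑ j ∈ s, |mass (c j).1 - mass (c j).2| + ∑ j ∈ s, mass (c j).2 := by
    rw [← Finset.sum_add_distrib]
    exact Finset.sum_le_sum fun j _ => by linarith [le_abs_self (mass (c j).1 - mass (c j).2)]
  linarith

/-- The matched blocks to the left of `(c k).1` fill `[0, (c k).1.1]` up to the distortion, and
their partners lie to the left of `(c k).2`. -/
lemma IsCorrespondence.left_le (h : IsCorrespondence β γ n c) (k : Fin n) :
    (c k).1.1 ≤ (c k).2.1 + hausDistortion β γ n c := by
  have h1 := h.swap.sum_Iio_le k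
  have h2 := h.sum_Ioi_le k
  have h3 := sum_split (fun j => mass (c j).1) k
  have h4 := sum_mass_fst_le (c := c) (Finset.Iio k)
  have h5 : _ ≤ hausDistortion β γ n c := le_max_left _ _
  have h6 : mass (c k).1 = (c k).1.2 - (c k).1.1 := rfl
  simp only [Prod.fst_swap] at h1 h3
  linarith

/-- The mirror image of `left_le`, with distances measured from the right ends of the partitions. -/
lemma IsCorrespondence.right_le (h : IsCorrespondence β γ n c) (k : Fin n) :
    β.length - (c k).1.2 ≤ γ.length - (c k).2.2 + hausDistortion β γ n c := by
  have h1 := h.swap.sum_Ioi_le k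
  have h2 := h.sum_Iio_le k
  have h3 := sum_split (fun j => mass (c j).1) k
  have h4 := sum_mass_fst_le (c := c) (Finset.Ioi k)
  have h5 : _ ≤ hausDistortion β γ n c := le_max_left _ _
  have h6 : mass (c k).1 = (c k).1.2 - (c k).1.1 := rfl
  simp only [Prod.fst_swap] at h1 h3
  linarith

lemma length_le_of_dHp_eq_zero (h : dHp β γ = 0) : β.length ≤ γ.length := by
  refine le_of_forall_pos_le_add fun ε hε => ?_
  obtain ⟨n, c, hc, h1⟩ := exists_lt_of_dHp_lt (h.trans_lt hε)
  linarith [hc.length_le]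

lemma exists_close_block (h : dHp β γ = 0) (hl : β.length = γ.length) {p : ℝ × ℝ}
    (hp : p ∈ β.blocks) {ε : ℝ} (hε : 0 < ε) (hεp : ε ≤ mass p) :
    ∃ q ∈ γ.blocks, |p.1 - q.1| ≤ ε ∧ |p.2 - q.2| ≤ ε := by
  obtain ⟨n, c, hc, h1⟩ := exists_lt_of_dHp_lt (h.trans_lt hε)
  obtain ⟨k, rfl⟩ := hc.exists_index hp (h1.trans_le hεp)
  have a1 := hc.left_le k
  have a2 := hc.right_le k
  have b1 := hc.swap.left_le k
  have b2 := hc.swap.right_le k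
  rw [hausDistortion_swap] at b1 b2
  simp only [Prod.fst_swap, Prod.snd_swap] at b1 b2
  refine ⟨(c k).2, (hc.1 k).2, abs_le.2 ⟨?_, ?_⟩, abs_le.2 ⟨?_, ?_⟩⟩ <;> linarith

lemma blocks_subset_of_dHp_eq_zero (h : dHp β γ = 0) (hl : β.length = γ.length) :
    β.blocks ⊆ γ.blocks := by
  intro p hp
  have hlt : 0 < mass p := sub_pos.2 (β.blocks_lt p hp)
  have hmass : mass p = p.2 - p.1 := rfl
  obtain ⟨q, hq, hq1, hq2⟩ := exists_close_block h hl hp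
    (show 0 < mass p / 4 by linarith) (by linarith)
  have key : ∀ ε, 0 < ε → |p.1 - q.1| ≤ ε ∧ |p.2 - q.2| ≤ ε := by
    intro ε hε
    obtain ⟨r, hr, hr1, hr2⟩ := exists_close_block h hl hp
      (show 0 < min ε (mass p / 4) from lt_min hε (by linarith))
      ((min_le_right _ _).trans (by linarith))
    -- Both `q` and `r` contain the midpoint of `p`.
    have hqr : q = r := by
      by_contra hne
      have m := min_le_right ε (mass p / 4)
      rw [abs_le] at hq1 hq2 hr1 hr2
      rcases γ.blocks_ordered hq hr hne with h' | h' <;>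
        linarith [hq1.1, hq1.2, hq2.1, hq2.2, hr1.1, hr1.2, hr2.1, hr2.2]
    rw [hqr]
    exact ⟨hr1.trans (min_le_left _ _), hr2.trans (min_le_left _ _)⟩
  have e1 : |p.1 - q.1| ≤ 0 :=
    le_of_forall_pos_le_add fun ε hε => by simpa using (key ε hε).1
  have e2 : |p.2 - q.2| ≤ 0 :=
    le_of_forall_pos_le_add fun ε hε => by simpa using (key ε hε).2
  have : p = q := Prod.ext (sub_eq_zero.1 (abs_nonpos_iff.1 e1))
    (sub_eq_zero.1 (abs_nonpos_iff.1 e2))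
  rwa [this]

lemma eq_of_dHp_eq_zero (h : dHp β γ = 0) : β = γ := by
  have h' : dHp γ β = 0 :=
    le_antisymm ((dHp_comm_le γ β).trans h.le) (dHp_nonneg γ β)
  have hl := le_antisymm (length_le_of_dHp_eq_zero h) (length_le_of_dHp_eq_zero h')
  have hb := Set.Subset.antisymm (blocks_subset_of_dHp_eq_zero h hl)
    (blocks_subset_of_dHp_eq_zero h' hl.symm)
  cases β
  cases γ
  simp only at hl hb
  subst hl hb
  rfl

end Separation

end IntervalPartition

/-- `d_H'` is a metric on `I_H`: nonnegative, symmetric, vanishing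
precisely when the two interval partitions are equal, and satisfying the
triangle inequality. -/
theorem dHp_is_metric :
    (∀ β γ : IntervalPartition, 0 ≤ IntervalPartition.dHp β γ) ∧
    (∀ β γ : IntervalPartition, IntervalPartition.dHp β γ = IntervalPartition.dHp γ β) ∧
    (∀ β γ : IntervalPartition, IntervalPartition.dHp β γ = 0 ↔ β = γ) ∧
    (∀ β γ η : IntervalPartition,
      IntervalPartition.dHp β γ ≤ IntervalPartition.dHp β η + IntervalPartition.dHp η γ) := by
  exact ⟨IntervalPartition.dHp_nonneg,
    fun β γ => le_antisymm (IntervalPartition.dHp_comm_le β γ) (IntervalPartition.dHp_comm_le γ β),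
    fun β γ => ⟨IntervalPartition.eq_of_dHp_eq_zero, fun h => h ▸ IntervalPartition.dHp_self β⟩,
    IntervalPartition.dHp_triangle⟩
end

section
/- The metric space (I_H, d_H) is not complete: the sequence of interval partitions β_n = {((i−1)2^{−n}, i·2^{−n}) : 1 ≤ i ≤ 2^n} ∪ {(1,2)}, n ≥ 0, is d_H-Cauchy, but it has no limit in I_H (its complements converge in the Hausdorff metric to the set [0,1]∪{2}, which is not Lebesgue-null in [0,2]). -/
/-!
The complement of the `n`-th partition is the dyadic grid of step `2⁻ⁿ` in `[0, 1]` together with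
the point `2`, so its Hausdorff distance to `T = [0, 1] ∪ {2}` is at most `2⁻ⁿ`
(`hausdorffDist_gridPartition_le`); this gives both the Cauchy property and the convergence of the
complements. The complement of any interval partition is a nonempty bounded closed set, and so is
`T`. By the triangle inequality a `d_H`-limit `y` would therefore have Hausdorff distance `0` from
`T`, hence have complement equal to `T`; this is impossible because the complement of `y` is null
while `T` has measure at least `1`.
-/

open MeasureTheory Filter Topology Set

namespace IntervalPartition

/-! ### The dyadic grid partitions -/

/-- The blocks of the `n`-th partition: the dyadic intervals of length `2⁻ⁿ` in `[0, 1]`, and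
`(1, 2)`. -/
def gridBlocks (n : ℕ) : Set (ℝ × ℝ) :=
  {p : ℝ × ℝ | (∃ i : ℕ, 1 ≤ i ∧ i ≤ 2 ^ n ∧
    p = (((i : ℝ) - 1) / 2 ^ n, (i : ℝ) / 2 ^ n)) ∨ p = (1, 2)}

lemma grid_le_one {n i : ℕ} (hi : i ≤ 2 ^ n) : (i : ℝ) / 2 ^ n ≤ 1 := by
  rw [div_le_one (by positivity)]
  exact_mod_cast hi

/-- Grid points avoid every block because no natural number lies strictly between `i - 1` and
`i`; all other points of `[0, 2)` are covered. -/
lemma compl_gridBlocks (n : ℕ) :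
    Icc (0 : ℝ) 2 \ ⋃ p ∈ gridBlocks n, Ioo p.1 p.2 =
      (fun k : ℕ => (k : ℝ) / 2 ^ n) '' Iic (2 ^ n) ∪ {2} := by
  have h2 : (0 : ℝ) < 2 ^ n := by positivity
  ext t
  simp only [Set.mem_sdiff, mem_iUnion, not_exists, mem_union, mem_image, mem_singleton_iff, mem_Iic,
    mem_Icc]
  constructor
  · rintro ⟨⟨h0, ht2⟩, h⟩
    rcases le_or_gt t 1 with ht1 | ht1
    · left
      -- Either `t` equals the grid point just above it, or it lies in the block ending there.
      refine ⟨⌈t * 2 ^ n⌉₊, Nat.ceil_le.2 (by push_cast; nlinarith), ?_⟩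
      by_contra hne
      have hlt : t * 2 ^ n < ⌈t * 2 ^ n⌉₊ := by
        refine lt_of_le_of_ne (Nat.le_ceil _) fun he => hne ?_
        rw [← he]
        field_simp
      have hge := Nat.ceil_lt_add_one (mul_nonneg h0 h2.le)
      refine h _ (Or.inl ⟨⌈t * 2 ^ n⌉₊, ?_, Nat.ceil_le.2 (by push_cast; nlinarith), rfl⟩) ⟨?_, ?_⟩
      · have : (0 : ℝ) < ⌈t * 2 ^ n⌉₊ := lt_of_le_of_lt (by positivity) hlt
        exact_mod_cast this
      · simp only
        rw [div_lt_iff₀ h2]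
        linarith
      · simp only
        rwa [lt_div_iff₀ h2]
    · right
      by_contra hne
      exact h (1, 2) (Or.inr rfl) ⟨ht1, lt_of_le_of_ne ht2 hne⟩
  · rintro (⟨k, hk, rfl⟩ | rfl)
    · have hk1 := grid_le_one hk
      refine ⟨⟨by positivity, by linarith⟩, ?_⟩
      rintro p (⟨i, -, -, rfl⟩ | rfl) ⟨ha, hb⟩
      · simp only at ha hb
        rw [div_lt_div_iff_of_pos_right h2] at ha hb
        have h1 : i < k + 1 := by
          have : (i : ℝ) < k + 1 := by linarith
          exact_mod_cast this
        have h3 : k < i := by exact_mod_cast hb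
        omega
      · simp only at ha
        linarith
    · refine ⟨by norm_num, ?_⟩
      rintro p (⟨i, -, hi, rfl⟩ | rfl) ⟨ha, hb⟩
      · have := grid_le_one hi
        simp only at hb
        linarith
      · simp at hb

/-- The `n`-th interval partition of the sequence; its complement is finite, hence null. -/
noncomputable def gridPartition (n : ℕ) : IntervalPartition where
  length := 2
  length_nonneg := by norm_num
  blocks := gridBlocks n
  blocks_lt := by
    rintro p (⟨i, -, -, rfl⟩ | rfl)
    · simp only
      gcongr
      linarith
    · norm_num
  blocks_sub := by
    rintro p (⟨i, hi, hi', rfl⟩ | rfl)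
    · have := grid_le_one hi'
      have h1 : (1 : ℝ) ≤ i := by exact_mod_cast hi
      exact ⟨div_nonneg (by linarith) (by positivity), by simp only; linarith⟩
    · norm_num
  blocks_disjoint := by
    have h2 : (0 : ℝ) < 2 ^ n := by positivity
    rintro p (⟨i, -, hi', rfl⟩ | rfl) q (⟨j, -, hj', rfl⟩ | rfl) hne
    · rw [Set.eq_empty_iff_forall_notMem]
      rintro t ⟨⟨h3, h4⟩, h5, h6⟩
      simp only at h3 h4 h5 h6
      have hij : i < j + 1 := by
        have := (div_lt_div_iff_of_pos_right h2).1 (h3.trans h6)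
        have : (i : ℝ) < j + 1 := by linarith
        exact_mod_cast this
      have hji : j < i + 1 := by
        have := (div_lt_div_iff_of_pos_right h2).1 (h5.trans h4)
        have : (j : ℝ) < i + 1 := by linarith
        exact_mod_cast this
      obtain rfl : i = j := by omega
      exact hne rfl
    · rw [Set.eq_empty_iff_forall_notMem]
      rintro t ⟨⟨-, h4⟩, h5, -⟩
      have := grid_le_one hi'
      simp only at h4 h5
      linarith
    · rw [Set.eq_empty_iff_forall_notMem]
      rintro t ⟨⟨h3, -⟩, -, h6⟩
      have := grid_le_one hj'
      simp only at h3 h6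
      linarith
    · exact absurd rfl hne
  compl_null := by
    rw [compl_gridBlocks]
    exact (((finite_Iic _).image _).union (finite_singleton _)).measure_zero _

lemma cset_gridPartition (n : ℕ) :
    (gridPartition n).cset = (fun k : ℕ => (k : ℝ) / 2 ^ n) '' Iic (2 ^ n) ∪ {2} :=
  compl_gridBlocks n

/-! ### Complements of interval partitions and the limit set -/

lemma zero_mem_cset (β : IntervalPartition) : (0 : ℝ) ∈ β.cset := by
  refine ⟨⟨le_rfl, β.length_nonneg⟩, ?_⟩
  simp only [mem_iUnion, not_exists]
  intro p hp h
  exact absurd h.1 (not_lt.2 (β.blocks_sub p hp).1)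

lemma isClosed_cset (β : IntervalPartition) : IsClosed β.cset :=
  isClosed_Icc.sdiff (isOpen_biUnion fun _ _ => isOpen_Ioo)

lemma isBounded_cset (β : IntervalPartition) : Bornology.IsBounded β.cset :=
  (Metric.isBounded_Icc 0 β.length).subset sdiff_subset

lemma isBounded_limit : Bornology.IsBounded (Icc (0 : ℝ) 1 ∪ {2}) :=
  (Metric.isBounded_Icc 0 1).union Bornology.isBounded_singleton

lemma isClosed_limit : IsClosed (Icc (0 : ℝ) 1 ∪ {2}) :=
  isClosed_Icc.union isClosed_singleton

lemma volume_limit_ne_zero : volume (Icc (0 : ℝ) 1 ∪ {2}) ≠ 0 := by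
  intro h
  have := measure_mono_null subset_union_left h
  simp at this

/-- Finiteness of the extended distance, without which the real-valued `Metric.hausdorffDist`
would take its junk value `0`. -/
lemma hausdorffEDist_limit_ne_top (β : IntervalPartition) :
    Metric.hausdorffEDist β.cset (Icc (0 : ℝ) 1 ∪ {2}) ≠ ⊤ :=
  Metric.hausdorffEDist_ne_top_of_nonempty_of_bounded ⟨0, β.zero_mem_cset⟩ ⟨2, Or.inr rfl⟩
    β.isBounded_cset isBounded_limit

/-- The complement is contained in the limit set, and `t ∈ [0, 1]` lies within `2⁻ⁿ` of the grid
point `⌊t 2ⁿ⌋ / 2ⁿ`. -/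
lemma hausdorffDist_gridPartition_le (n : ℕ) :
    Metric.hausdorffDist (gridPartition n).cset (Icc (0 : ℝ) 1 ∪ {2}) ≤ (1 / 2) ^ n := by
  have h2 : (0 : ℝ) < 2 ^ n := by positivity
  rw [cset_gridPartition]
  refine Metric.hausdorffDist_le_of_mem_dist (by positivity) ?_ ?_
  · rintro t (⟨k, hk, rfl⟩ | rfl)
    · exact ⟨_, Or.inl ⟨by positivity, grid_le_one hk⟩, by rw [dist_self]; positivity⟩
    · exact ⟨2, Or.inr rfl, by rw [dist_self]; positivity⟩
  · rintro t (⟨h0, h1⟩ | rfl)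
    · have hf := Nat.floor_le (mul_nonneg h0 h2.le)
      have hl := Nat.lt_floor_add_one (t * 2 ^ n)
      refine ⟨(⌊t * 2 ^ n⌋₊ : ℝ) / 2 ^ n, Or.inl ⟨_, ?_, rfl⟩, ?_⟩
      · have : ((⌊t * 2 ^ n⌋₊ : ℕ) : ℝ) ≤ (2 ^ n : ℕ) := by push_cast; nlinarith
        exact_mod_cast this
      · have e : t - (⌊t * 2 ^ n⌋₊ : ℝ) / 2 ^ n = (t * 2 ^ n - ⌊t * 2 ^ n⌋₊) / 2 ^ n := by
          field_simp
        rw [Real.dist_eq, e, abs_of_nonneg (div_nonneg (by linarith) h2.le), one_div_pow]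
        gcongr
        linarith
    · exact ⟨2, Or.inr rfl, by rw [dist_self]; positivity⟩

lemma tendsto_hausdorffDist_gridPartition :
    Tendsto (fun n => Metric.hausdorffDist (gridPartition n).cset (Icc (0 : ℝ) 1 ∪ {2}))
      atTop (𝓝 0) :=
  squeeze_zero (fun _ => Metric.hausdorffDist_nonneg) hausdorffDist_gridPartition_le
    (tendsto_pow_atTop_nhds_zero_of_lt_one (by norm_num) (by norm_num))

end IntervalPartition

open IntervalPartition in
/-- `(I_H, d_H)` is not complete: the sequence
`β_n = {((i-1)2^{-n}, i 2^{-n}) : 1 ≤ i ≤ 2^n} ∪ {(1,2)}` is `d_H`-Cauchy, its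
complements converge in the Hausdorff metric to `[0,1] ∪ {2}`, which is not
Lebesgue-null, and it has no `d_H`-limit in `I_H`. -/
theorem dH_not_complete :
    ∃ x : ℕ → IntervalPartition,
      (∀ n : ℕ, (x n).length = 2 ∧ (x n).blocks =
        {p : ℝ × ℝ | (∃ i : ℕ, 1 ≤ i ∧ i ≤ 2 ^ n ∧
          p = (((i : ℝ) - 1) / 2 ^ n, (i : ℝ) / 2 ^ n)) ∨ p = (1, 2)}) ∧
      (∀ ε : ℝ, 0 < ε → ∃ N : ℕ, ∀ m ≥ N, ∀ n ≥ N, dH (x m) (x n) < ε) ∧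
      Tendsto (fun n => Metric.hausdorffDist ((x n).cset) (Set.Icc (0:ℝ) 1 ∪ {2}))
        atTop (𝓝 0) ∧
      volume (Set.Icc (0:ℝ) 1 ∪ {2}) ≠ 0 ∧
      ¬ ∃ y : IntervalPartition, Tendsto (fun n => dH (x n) y) atTop (𝓝 0) := by
  refine ⟨gridPartition, fun n => ⟨rfl, rfl⟩, ?_, tendsto_hausdorffDist_gridPartition,
    volume_limit_ne_zero, ?_⟩
  · intro ε hε
    obtain ⟨N, hN⟩ := eventually_atTop.1
      (tendsto_hausdorffDist_gridPartition.eventually (gt_mem_nhds (half_pos hε)))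
    refine ⟨N, fun m hm n hn => ?_⟩
    have h1 := Metric.hausdorffDist_triangle (u := (gridPartition n).cset)
      (hausdorffEDist_limit_ne_top (gridPartition m))
    have h2 := hN n hn
    rw [Metric.hausdorffDist_comm] at h2
    have h3 := hN m hm
    unfold dH
    linarith
  · rintro ⟨y, hy⟩
    have hle : ∀ n, Metric.hausdorffDist y.cset (Icc (0 : ℝ) 1 ∪ {2}) ≤
        dH (gridPartition n) y +
          Metric.hausdorffDist (gridPartition n).cset (Icc (0 : ℝ) 1 ∪ {2}) := by
      intro n
      rw [dH, Metric.hausdorffDist_comm (s := (gridPartition n).cset) (t := y.cset)]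
      exact Metric.hausdorffDist_triangle
        (Metric.hausdorffEDist_ne_top_of_nonempty_of_bounded ⟨0, y.zero_mem_cset⟩
          ⟨0, zero_mem_cset _⟩ y.isBounded_cset (isBounded_cset _))
    have h0 : Metric.hausdorffDist y.cset (Icc (0 : ℝ) 1 ∪ {2}) = 0 := by
      refine le_antisymm ?_ Metric.hausdorffDist_nonneg
      have := ge_of_tendsto' (hy.add tendsto_hausdorffDist_gridPartition) hle
      simpa using this
    have heq := (y.isClosed_cset.hausdorffDist_zero_iff_eq isClosed_limit
      (hausdorffEDist_limit_ne_top y)).1 h0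
    exact volume_limit_ne_zero (heq ▸ y.compl_null)
end
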